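/- arXiv:1907.03792 — 2 statements merged into one kernel-verified Lean document; each statement's English description precedes it below -/
import Mathlib

section
/- The function h(γ) = E[tanh(√γ·Z + γ)], for Z standard Gaussian, is concave on [0,∞). -/
/-!
Since `exp x * tanh x = exp x - sech x`, the Cameron–Martin shift turns the expectation into
`h γ = 1 - exp (-γ / 2) * E[sech (√γ * Z)]`. Gaussian integration by parts gives the heat equation
`d/dγ E[f (√γ * Z)] = E[f'' (√γ * Z)] / 2`, and `sech'' = sech - 2 * sech ^ 3`, so the two `sech`
terms of the product rule cancel: `h' γ = exp (-γ / 2) * E[sech (√γ * Z) ^ 3]`. Both factors are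
nonnegative and nonincreasing in `γ`, hence `h` is concave.
-/

open MeasureTheory ProbabilityTheory Real

open scoped NNReal

section Scaling

variable {ν : Measure ℝ}

lemma hasDerivAt_integral_comp_mul {f f' : ℝ → ℝ} {C s : ℝ} (hν : Integrable (fun x ↦ x) ν)
    (hf : ∀ x, HasDerivAt f (f' x) x) (hf'_le : ∀ x, |f' x| ≤ C)
    (hf_int : Integrable (fun x ↦ f (s * x)) ν) :
    HasDerivAt (fun t ↦ ∫ x, f (t * x) ∂ν) (∫ x, x * f' (s * x) ∂ν) s := by
  have hf_cont : Continuous f := continuous_iff_continuousAt.2 fun x ↦ (hf x).continuousAt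
  have hf'_meas : Measurable f' := by
    rw [← funext fun x ↦ (hf x).deriv]
    exact measurable_deriv f
  refine (hasDerivAt_integral_of_dominated_loc_of_deriv_le (F := fun t x ↦ f (t * x))
    (F' := fun t x ↦ x * f' (t * x)) (bound := fun x ↦ |x| * C) Filter.univ_mem
    (.of_forall fun t ↦ ?_) hf_int ?_ (.of_forall fun x t _ ↦ ?_) (hν.abs.mul_const C)
    (.of_forall fun x t _ ↦ ?_)).2
  · exact (hf_cont.comp (continuous_const_mul t)).aestronglyMeasurable
  · exact (measurable_id.mul (hf'_meas.comp (measurable_const_mul s))).aestronglyMeasurable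
  · rw [norm_mul, norm_eq_abs, norm_eq_abs]
    exact mul_le_mul_of_nonneg_left (hf'_le _) (abs_nonneg x)
  · simpa only [mul_comm x, Function.comp_def] using (hf (t * x)).comp t (hasDerivAt_mul_const x)

lemma antitoneOn_integral_comp_mul {g : ℝ → ℝ} (hg : ∀ x y, |x| ≤ |y| → g y ≤ g x)
    (hg_int : ∀ s, 0 ≤ s → Integrable (fun x ↦ g (s * x)) ν) :
    AntitoneOn (fun s ↦ ∫ x, g (s * x) ∂ν) (Set.Ici 0) := by
  intro s (hs : 0 ≤ s) t (ht : 0 ≤ t) hst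
  refine integral_mono (hg_int t ht) (hg_int s hs) fun x ↦ hg _ _ ?_
  rw [abs_mul, abs_mul, abs_of_nonneg hs, abs_of_nonneg ht]
  gcongr

end Scaling

section Gaussian

variable {μ : ℝ} {v : ℝ≥0}

lemma integral_exp_mul_gaussianReal (t : ℝ) :
    ∫ x, rexp (t * x) ∂gaussianReal μ v = rexp (μ * t + v * t ^ 2 / 2) :=
  congrFun mgf_fun_id_gaussianReal t

lemma gaussianReal_tilted_mul (t : ℝ) :
    (gaussianReal μ v).tilted (fun x ↦ t * x) = gaussianReal (μ + v * t) v := by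
  rcases eq_or_ne v 0 with rfl | hv
  · simp [Measure.tilted, gaussianReal_zero_var, dirac_withDensity]
  rw [Measure.tilted, integral_exp_mul_gaussianReal, gaussianReal_of_var_ne_zero _ hv,
    gaussianReal_of_var_ne_zero _ hv,
    ← withDensity_mul _ (measurable_gaussianPDF μ v) (by fun_prop)]
  congr 1 with x
  rw [Pi.mul_apply, gaussianPDF, gaussianPDF, ← ENNReal.ofReal_mul (gaussianPDFReal_nonneg μ v x),
    gaussianPDFReal, gaussianPDFReal, mul_assoc, ← exp_sub, ← exp_add]
  congr 3
  have : (v : ℝ) ≠ 0 := NNReal.coe_ne_zero.2 hv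
  field_simp
  ring

lemma integral_comp_add_gaussianReal {f : ℝ → ℝ} (hf : Measurable f) (t : ℝ) :
    ∫ x, f (x + v * t) ∂gaussianReal μ v =
      rexp (-(μ * t + v * t ^ 2 / 2)) * ∫ x, rexp (t * x) * f x ∂gaussianReal μ v := by
  rw [← integral_map (φ := fun x ↦ x + v * t) (by fun_prop) hf.aestronglyMeasurable,
    gaussianReal_map_add_const, ← gaussianReal_tilted_mul, integral_tilted,
    integral_exp_mul_gaussianReal, ← integral_const_mul]
  congr 1 with x
  rw [exp_neg, smul_eq_mul]
  ring

lemma hasDerivAt_gaussianPDFReal (x : ℝ) :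
    HasDerivAt (gaussianPDFReal μ v) (-((x - μ) / v * gaussianPDFReal μ v x)) x := by
  have hexp := (((((hasDerivAt_id x).sub_const μ).pow 2).neg.div_const (2 * v : ℝ)).exp).const_mul
    (√(2 * π * v))⁻¹
  refine hexp.congr_deriv ?_
  simp only [gaussianPDFReal, id_eq, Pi.neg_apply, Pi.pow_apply, Nat.cast_ofNat,
    Nat.add_one_sub_one, pow_one, mul_one]
  ring

lemma integrable_gaussianReal_iff {f : ℝ → ℝ} (hv : v ≠ 0) :
    Integrable f (gaussianReal μ v) ↔ Integrable (fun x ↦ gaussianPDFReal μ v x * f x) := by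
  rw [gaussianReal_of_var_ne_zero μ hv,
    integrable_withDensity_iff_integrable_smul' (measurable_gaussianPDF μ v)
      (.of_forall fun _ ↦ gaussianPDF_lt_top)]
  simp only [toReal_gaussianPDF, smul_eq_mul]

lemma integral_sub_mul_gaussianReal {u u' : ℝ → ℝ} (hu : ∀ x, HasDerivAt u (u' x) x)
    (hu_int : Integrable u (gaussianReal μ v)) (hu'_int : Integrable u' (gaussianReal μ v))
    (hxu_int : Integrable (fun x ↦ (x - μ) * u x) (gaussianReal μ v)) :
    ∫ x, (x - μ) * u x ∂gaussianReal μ v = v * ∫ x, u' x ∂gaussianReal μ v := by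
  rcases eq_or_ne v 0 with rfl | hv
  · simp [gaussianReal_zero_var]
  have hv' : (v : ℝ) ≠ 0 := NNReal.coe_ne_zero.2 hv
  rw [integrable_gaussianReal_iff hv] at hu_int hu'_int hxu_int
  have hparts := integral_mul_deriv_eq_deriv_mul_of_integrable (fun x _ ↦ hu x)
    (fun x _ ↦ hasDerivAt_gaussianPDFReal (μ := μ) (v := v) x)
    ((hxu_int.const_mul (-(v : ℝ)⁻¹)).congr (.of_forall fun x ↦ by simp only [Pi.mul_apply]; ring))
    (hu'_int.congr (.of_forall fun x ↦ mul_comm _ _))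
    (hu_int.congr (.of_forall fun x ↦ mul_comm _ _))
  rw [integral_gaussianReal_eq_integral_smul hv, integral_gaussianReal_eq_integral_smul hv]
  calc ∫ x, gaussianPDFReal μ v x * ((x - μ) * u x)
      = -v * ∫ x, u x * -((x - μ) / v * gaussianPDFReal μ v x) := by
        rw [← integral_const_mul]
        congr 1 with x
        field_simp
    _ = v * ∫ x, u' x * gaussianPDFReal μ v x := by rw [hparts, neg_mul_neg]
    _ = v * ∫ x, gaussianPDFReal μ v x * u' x := by simp only [mul_comm]

lemma integrable_fun_id_gaussianReal : Integrable (fun x ↦ x) (gaussianReal μ v) :=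
  (memLp_id_gaussianReal 1).integrable le_rfl

lemma hasDerivAt_integral_comp_sqrt_mul_gaussianReal {f f' f'' : ℝ → ℝ} {C γ : ℝ} (hγ : 0 < γ)
    (hf : ∀ x, HasDerivAt f (f' x) x) (hf' : ∀ x, HasDerivAt f' (f'' x) x)
    (hf'_le : ∀ x, |f' x| ≤ C)
    (hf_int : Integrable (fun z ↦ f (√γ * z)) (gaussianReal 0 1))
    (hf''_int : Integrable (fun z ↦ f'' (√γ * z)) (gaussianReal 0 1)) :
    HasDerivAt (fun t ↦ ∫ z, f (√t * z) ∂gaussianReal 0 1)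
      ((∫ z, f'' (√γ * z) ∂gaussianReal 0 1) / 2) γ := by
  have hu (z : ℝ) : HasDerivAt (fun z ↦ f' (√γ * z)) (√γ * f'' (√γ * z)) z := by
    simpa only [mul_comm √γ, Function.comp_def] using
      (hf' (√γ * z)).comp z (hasDerivAt_const_mul √γ)
  have hu_meas : AEStronglyMeasurable (fun z ↦ f' (√γ * z)) (gaussianReal 0 1) :=
    (continuous_iff_continuousAt.2 fun z ↦ (hu z).continuousAt).aestronglyMeasurable
  have hu_le : ∀ᵐ z ∂gaussianReal 0 1, ‖f' (√γ * z)‖ ≤ C := .of_forall fun z ↦ hf'_le _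
  have hstein : ∫ z, z * f' (√γ * z) ∂gaussianReal 0 1 =
      √γ * ∫ z, f'' (√γ * z) ∂gaussianReal 0 1 := by
    have hparts := integral_sub_mul_gaussianReal hu (.of_bound hu_meas C hu_le)
      (hf''_int.const_mul √γ)
      (by simpa only [sub_zero] using integrable_fun_id_gaussianReal.mul_bdd hu_meas hu_le)
    simpa [integral_const_mul] using hparts
  have hscale := hasDerivAt_integral_comp_mul integrable_fun_id_gaussianReal hf hf'_le hf_int
  refine (hscale.comp γ (hasDerivAt_sqrt hγ.ne')).congr_deriv ?_
  rw [hstein]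
  field_simp

end Gaussian

section Sech

/-- The hyperbolic secant `1 / cosh x`, which appears when `tanh` is integrated against a
Gaussian whose mean equals its variance. -/
noncomputable def sech (x : ℝ) : ℝ := (cosh x)⁻¹

lemma sech_pos (x : ℝ) : 0 < sech x := inv_pos.2 (cosh_pos x)

lemma sech_le_one (x : ℝ) : sech x ≤ 1 := inv_le_one_of_one_le₀ (one_le_cosh x)

lemma sech_le_sech_of_abs_le {x y : ℝ} (h : |x| ≤ |y|) : sech y ≤ sech x :=
  inv_anti₀ (cosh_pos x) (cosh_le_cosh.2 h)

lemma exp_mul_tanh (x : ℝ) : rexp x * tanh x = rexp x - sech x := by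
  have hcosh := (cosh_pos x).ne'
  rw [tanh_eq_sinh_div_cosh, sech, ← cosh_add_sinh]
  field_simp
  linear_combination -cosh_sq_sub_sinh_sq x

lemma tanh_sq_add_sech_sq (x : ℝ) : tanh x ^ 2 + sech x ^ 2 = 1 := by
  have hcosh := (cosh_pos x).ne'
  rw [tanh_eq_sinh_div_cosh, sech]
  field_simp
  exact (cosh_sq x).symm

lemma hasDerivAt_sech (x : ℝ) : HasDerivAt sech (-(tanh x * sech x)) x := by
  refine ((hasDerivAt_cosh x).inv (cosh_pos x).ne').congr_deriv ?_
  rw [tanh_eq_sinh_div_cosh, sech]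
  ring

lemma hasDerivAt_tanh (x : ℝ) : HasDerivAt tanh (sech x ^ 2) x := by
  have hquot := (hasDerivAt_sinh x).div (hasDerivAt_cosh x) (cosh_pos x).ne'
  rw [show tanh = sinh / cosh from funext tanh_eq_sinh_div_cosh]
  refine hquot.congr_deriv ?_
  rw [← sq, ← sq, cosh_sq_sub_sinh_sq, sech, inv_pow, one_div]

lemma hasDerivAt_neg_tanh_mul_sech (x : ℝ) :
    HasDerivAt (fun x ↦ -(tanh x * sech x)) (sech x - 2 * sech x ^ 3) x := by
  refine ((hasDerivAt_tanh x).mul (hasDerivAt_sech x)).neg.congr_deriv ?_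
  linear_combination sech x * tanh_sq_add_sech_sq x

lemma abs_neg_tanh_mul_sech_le_one (x : ℝ) : |-(tanh x * sech x)| ≤ 1 := by
  rw [abs_neg, abs_mul, abs_of_pos (sech_pos x)]
  exact mul_le_one₀ (abs_tanh_lt_one x).le (sech_pos x).le (sech_le_one x)

lemma continuous_sech : Continuous sech :=
  continuous_iff_continuousAt.2 fun x ↦ (hasDerivAt_sech x).continuousAt

variable {ν : Measure ℝ} [IsFiniteMeasure ν]

lemma integrable_sech_mul_pow (s : ℝ) (n : ℕ) : Integrable (fun x ↦ sech (s * x) ^ n) ν := by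
  refine .of_bound ((continuous_sech.comp (continuous_const_mul s)).pow n).aestronglyMeasurable 1
    (.of_forall fun x ↦ ?_)
  rw [norm_eq_abs, abs_of_pos (pow_pos (sech_pos _) n)]
  exact pow_le_one₀ (sech_pos _).le (sech_le_one _)

lemma integrable_sech_mul (s : ℝ) : Integrable (fun x ↦ sech (s * x)) ν := by
  simpa only [pow_one] using integrable_sech_mul_pow s 1

lemma continuous_integral_sech_mul (hν : Integrable (fun x ↦ x) ν) :
    Continuous fun s ↦ ∫ x, sech (s * x) ∂ν :=
  continuous_iff_continuousAt.2 fun s ↦ (hasDerivAt_integral_comp_mul hν hasDerivAt_sech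
    abs_neg_tanh_mul_sech_le_one (integrable_sech_mul s)).continuousAt

end Sech

lemma integral_tanh_gaussianReal (s : ℝ) :
    ∫ z, tanh (s * z + s ^ 2) ∂gaussianReal 0 1 =
      1 - rexp (-s ^ 2 / 2) * ∫ z, sech (s * z) ∂gaussianReal 0 1 := by
  have htanh : Measurable fun z ↦ tanh (s * z) :=
    (continuous_iff_continuousAt.2 fun x ↦ (hasDerivAt_tanh x).continuousAt).measurable.comp
      (measurable_const_mul s)
  have hmgf : ∫ z, rexp (s * z) ∂gaussianReal 0 1 = rexp (s ^ 2 / 2) := by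
    simpa using integral_exp_mul_gaussianReal (μ := 0) (v := 1) s
  calc ∫ z, tanh (s * z + s ^ 2) ∂gaussianReal 0 1
      = rexp (-s ^ 2 / 2) * ∫ z, rexp (s * z) * tanh (s * z) ∂gaussianReal 0 1 := by
        simpa [mul_add, sq, neg_div] using integral_comp_add_gaussianReal (μ := 0) (v := 1) htanh s
    _ = rexp (-s ^ 2 / 2) * (rexp (s ^ 2 / 2) - ∫ z, sech (s * z) ∂gaussianReal 0 1) := by
        simp only [exp_mul_tanh]
        rw [integral_sub (integrable_exp_mul_gaussianReal s) (integrable_sech_mul s), hmgf]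
    _ = 1 - rexp (-s ^ 2 / 2) * ∫ z, sech (s * z) ∂gaussianReal 0 1 := by
        rw [mul_sub, ← exp_add, neg_div, neg_add_cancel, exp_zero]

lemma hasDerivAt_one_sub_exp_mul_integral_sech {γ : ℝ} (hγ : 0 < γ) :
    HasDerivAt (fun t ↦ 1 - rexp (-t / 2) * ∫ z, sech (√t * z) ∂gaussianReal 0 1)
      (rexp (-γ / 2) * ∫ z, sech (√γ * z) ^ 3 ∂gaussianReal 0 1) γ := by
  have hsech := integrable_sech_mul (ν := gaussianReal 0 1) √γ
  have hcube := (integrable_sech_mul_pow (ν := gaussianReal 0 1) √γ 3).const_mul 2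
  have hheat := hasDerivAt_integral_comp_sqrt_mul_gaussianReal hγ hasDerivAt_sech
    hasDerivAt_neg_tanh_mul_sech abs_neg_tanh_mul_sech_le_one hsech (hsech.sub hcube)
  have hexp : HasDerivAt (fun t ↦ rexp (-t / 2)) (rexp (-γ / 2) * (-1 / 2)) γ :=
    ((hasDerivAt_id γ).neg.div_const 2).exp
  refine ((hexp.mul hheat).const_sub 1).congr_deriv ?_
  rw [integral_sub hsech hcube, integral_const_mul]
  ring

lemma antitoneOn_exp_mul_integral_sech_pow (n : ℕ) :
    AntitoneOn (fun γ ↦ rexp (-γ / 2) * ∫ z, sech (√γ * z) ^ n ∂gaussianReal 0 1)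
      (Set.Ici 0) := by
  have hscale := antitoneOn_integral_comp_mul (ν := gaussianReal 0 1) (g := fun x ↦ sech x ^ n)
    (fun x y hxy ↦ pow_le_pow_left₀ (sech_pos y).le (sech_le_sech_of_abs_le hxy) n)
    (fun s _ ↦ integrable_sech_mul_pow s n)
  intro a _ b _ hab
  refine mul_le_mul (exp_le_exp.2 (by linarith))
    (hscale (sqrt_nonneg a) (sqrt_nonneg b) (sqrt_le_sqrt hab))
    (integral_nonneg fun z ↦ (pow_pos (sech_pos _) n).le) (exp_pos _).le

/-- `h(γ) = E[tanh(√γ·Z + γ)]` (`Z ~ N(0,1)`) is concave on `[0,∞)`. -/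
theorem stmt8 :
    ConcaveOn ℝ (Set.Ici 0)
      (fun γ : ℝ => ∫ z, Real.tanh (Real.sqrt γ * z + γ) ∂(gaussianReal 0 1)) := by
  suffices hconcave : ConcaveOn ℝ (Set.Ici 0)
      fun γ ↦ 1 - rexp (-γ / 2) * ∫ z, sech (√γ * z) ∂gaussianReal 0 1 by
    refine hconcave.congr fun γ (hγ : 0 ≤ γ) ↦ ?_
    simpa only [sq_sqrt hγ] using (integral_tanh_gaussianReal √γ).symm
  refine AntitoneOn.concaveOn_of_deriv (convex_Ici 0) ?_ ?_ ?_
  · have hcont := (continuous_integral_sech_mul (ν := gaussianReal 0 1)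
      integrable_fun_id_gaussianReal).comp continuous_sqrt
    exact (continuous_const.sub (.mul (by fun_prop) hcont)).continuousOn
  · rw [interior_Ici]
    exact fun γ hγ ↦
      (hasDerivAt_one_sub_exp_mul_integral_sech hγ).differentiableAt.differentiableWithinAt
  · rw [interior_Ici]
    exact ((antitoneOn_exp_mul_integral_sech_pow 3).mono Set.Ioi_subset_Ici_self).congr
      fun γ hγ ↦ (hasDerivAt_one_sub_exp_mul_integral_sech hγ).deriv.symm
end

section
/- Fix α, σ > 0 and η ∈ (0,1]. Define f(q) = α(1−η)·i_v(q/σ²) + (α/(2σ²))(1−q) − (1/2)(q + log(1−q)) for q ∈ [0,1), where i_v(γ) = γ − E[log cosh(√γ Z + γ)] for Z standard Gaussian. Then f admits a unique critical point on [0,1), and this critical point is the unique minimizer of f on [0,1). -/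
open MeasureTheory ProbabilityTheory Real

/-! The derivative of `f` on `[0, 1)` is a positive combination of `(1 - η) M(q / σ²) - 1` and
`(1 - q)⁻¹ - 1`, where `M γ = E[1 - tanh (√γ Z + γ)]`. Tilting the Gaussian by `exp (-√γ Z)` gives
`M γ = E[exp (-γ / 2) / cosh (√γ Z)]`, which is an average of products of two convex decreasing
nonnegative functions of `γ`, hence convex. So `f'` is convex; being negative at `0` and positive
near `1`, it has exactly one zero and changes sign there from negative to positive. -/

open Set
open scoped NNReal

section ConvexDerivative

variable {s : Set ℝ} {a q x : ℝ} {f F : ℝ → ℝ}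

lemma convexOn_comp_mul_const {t : Set ℝ} (hF : ConvexOn ℝ t F) (hs : Convex ℝ s) (c : ℝ)
    (hst : MapsTo (· * c) s t) : ConvexOn ℝ s fun x ↦ F (x * c) :=
  (hF.comp_linearMap (LinearMap.mulRight ℝ c)).subset hst hs

lemma neg_of_convexOn_of_lt_root (hF : ConvexOn ℝ s F) (has : a ∈ s) (hqs : q ∈ s) (ha : F a < 0)
    (hq : F q = 0) (hax : a ≤ x) (hxq : x < q) : F x < 0 := by
  obtain rfl | hax := hax.eq_or_lt
  · exact ha
  · by_contra! hx
    have hx_seg : x ∈ openSegment ℝ a q := by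
      rw [openSegment_eq_Ioo (hax.trans hxq)]
      exact ⟨hax, hxq⟩
    exact (hF.lt_right_of_left_lt has hqs hx_seg (ha.trans_le hx)).not_ge (hq.trans_le hx)

lemma pos_of_convexOn_of_root_lt (hF : ConvexOn ℝ s F) (has : a ∈ s) (hxs : x ∈ s) (ha : F a < 0)
    (hq : F q = 0) (haq : a < q) (hqx : q < x) : 0 < F x := by
  have hq_seg : q ∈ openSegment ℝ a x := by
    rw [openSegment_eq_Ioo (haq.trans hqx)]
    exact ⟨haq, hqx⟩
  simpa only [hq] using hF.lt_right_of_left_lt has hxs hq_seg (ha.trans_eq hq.symm)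

lemma lt_root_of_isLeast (has : IsLeast s a) (ha : F a < 0) (hqs : q ∈ s) (hq : F q = 0) :
    a < q :=
  (has.2 hqs).lt_of_ne fun haq ↦ ha.ne (haq ▸ hq)

lemma existsUnique_root_of_convexOn (hF : ConvexOn ℝ s F) (hFc : ContinuousOn F s)
    (has : IsLeast s a) (ha : F a < 0) (hpos : ∃ c ∈ s, 0 < F c) : ∃! q, q ∈ s ∧ F q = 0 := by
  obtain ⟨c, hcs, hc⟩ := hpos
  have hsub : Icc a c ⊆ s := hF.1.ordConnected.out has.1 hcs
  obtain ⟨q, hq_mem, hq⟩ := intermediate_value_Icc (has.2 hcs) (hFc.mono hsub) ⟨ha.le, hc.le⟩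
  refine ⟨q, ⟨hsub hq_mem, hq⟩, ?_⟩
  rintro y ⟨hys, hy⟩
  rcases lt_trichotomy y q with hyq | hyq | hqy
  · exact absurd hy (neg_of_convexOn_of_lt_root hF has.1 (hsub hq_mem) ha hq (has.2 hys) hyq).ne
  · exact hyq
  · have haq := lt_root_of_isLeast has ha (hsub hq_mem) hq
    exact absurd hy (pos_of_convexOn_of_root_lt hF has.1 hys ha hq haq hqy).ne'

lemma lt_of_convexOn_hasDerivWithinAt_of_root (hF : ConvexOn ℝ s F)
    (hf : ∀ y ∈ s, HasDerivWithinAt f (F y) s y) (has : IsLeast s a) (ha : F a < 0)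
    (hqs : q ∈ s) (hq : F q = 0) (hxs : x ∈ s) (hxq : x ≠ q) : f q < f x := by
  have hf_Icc {u v : ℝ} (hu : u ∈ s) (hv : v ∈ s) :
      ∀ y ∈ Icc u v, HasDerivWithinAt f (F y) (Icc u v) y := fun y hy ↦
    have hsub := hF.1.ordConnected.out hu hv
    (hf y (hsub hy)).mono hsub
  rcases hxq.lt_or_gt with hxq | hqx
  · have hanti : StrictAntiOn f (Icc x q) := by
      refine strictAntiOn_of_hasDerivWithinAt_neg (convex_Icc x q)
        (fun y hy ↦ (hf_Icc hxs hqs y hy).continuousWithinAt)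
        (fun y hy ↦ (hf_Icc hxs hqs y (interior_subset hy)).mono interior_subset) fun y hy ↦ ?_
      rw [interior_Icc] at hy
      exact neg_of_convexOn_of_lt_root hF has.1 hqs ha hq ((has.2 hxs).trans hy.1.le) hy.2
    exact hanti (left_mem_Icc.2 hxq.le) (right_mem_Icc.2 hxq.le) hxq
  · have hmono : StrictMonoOn f (Icc q x) := by
      refine strictMonoOn_of_hasDerivWithinAt_pos (convex_Icc q x)
        (fun y hy ↦ (hf_Icc hqs hxs y hy).continuousWithinAt)
        (fun y hy ↦ (hf_Icc hqs hxs y (interior_subset hy)).mono interior_subset) fun y hy ↦ ?_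
      have hys : y ∈ s := hF.1.ordConnected.out hqs hxs (interior_subset hy)
      rw [interior_Icc] at hy
      exact pos_of_convexOn_of_root_lt hF has.1 hys ha hq (lt_root_of_isLeast has ha hqs hq) hy.1
    exact hmono (left_mem_Icc.2 hqx.le) (right_mem_Icc.2 hqx.le) hqx

lemma hasDerivAt_zero_iff_of_hasDerivWithinAt_Ici (hf : HasDerivWithinAt f (F q) (Ici a) q)
    (ha : F a ≠ 0) (haq : a ≤ q) : HasDerivAt f 0 q ↔ F q = 0 := by
  constructor
  · intro hf0
    exact (uniqueDiffOn_Ici a q haq).eq_deriv _ hf hf0.hasDerivWithinAt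
  · intro hq
    have haq : a < q := haq.lt_of_ne fun haq ↦ ha (haq ▸ hq)
    exact hq ▸ hf.hasDerivAt (Ici_mem_nhds haq)

end ConvexDerivative

section Integrals

lemma convexOn_integral {E Ω : Type*} [AddCommGroup E] [Module ℝ E] {_ : MeasurableSpace Ω}
    {μ : Measure Ω} {s : Set E} {g : E → Ω → ℝ} (hs : Convex ℝ s)
    (hg : ∀ᵐ ω ∂μ, ConvexOn ℝ s (g · ω)) (hint : ∀ x ∈ s, Integrable (g x) μ) :
    ConvexOn ℝ s fun x ↦ ∫ ω, g x ω ∂μ := by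
  refine ⟨hs, fun x hx y hy a b ha hb hab ↦ ?_⟩
  have hx_int := (hint x hx).const_mul a
  have hy_int := (hint y hy).const_mul b
  calc ∫ ω, g (a • x + b • y) ω ∂μ ≤ ∫ ω, (a * g x ω + b * g y ω) ∂μ := by
        refine integral_mono_ae (hint _ (hs hx hy ha hb hab)) (hx_int.add hy_int) ?_
        filter_upwards [hg] with ω hω using hω.2 hx hy ha hb hab
    _ = a • ∫ ω, g x ω ∂μ + b • ∫ ω, g y ω ∂μ := by
        rw [integral_add hx_int hy_int, integral_const_mul, integral_const_mul, smul_eq_mul,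
          smul_eq_mul]

lemma integral_eq_zero_of_odd {G E : Type*} [MeasurableSpace G] [AddGroup G]
    [MeasurableNeg G] [NormedAddCommGroup E] [NormedSpace ℝ E] {μ : Measure G}
    [μ.IsNegInvariant] {g : G → E} (hg : g.Odd) : ∫ x, g x ∂μ = 0 := by
  have h := integral_neg_eq_self g μ
  simp only [hg _, integral_neg] at h
  have : IsAddTorsionFree E := .of_isTorsionFree ℝ E
  exact self_eq_neg.1 h.symm

instance isNegInvariant_gaussianReal_zero (v : ℝ≥0) : (gaussianReal 0 v).IsNegInvariant :=
  ⟨by rw [Measure.neg_def, gaussianReal_map_neg, neg_zero]⟩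

lemma integrable_id_gaussianReal (m : ℝ) (v : ℝ≥0) : Integrable (fun z ↦ z) (gaussianReal m v) :=
  (memLp_id_gaussianReal 1).integrable (by simp)

lemma integral_exp_smul_comp_add_gaussianReal {E : Type*} [NormedAddCommGroup E]
    [NormedSpace ℝ E] (m : ℝ) {v : ℝ≥0} (hv : v ≠ 0) (r : ℝ) (g : ℝ → E) :
    ∫ z, exp (-(r * (z - m) + r ^ 2 / 2) / v) • g (z + r) ∂(gaussianReal m v) =
      ∫ z, g z ∂(gaussianReal m v) := by
  rw [integral_gaussianReal_eq_integral_smul hv, integral_gaussianReal_eq_integral_smul hv,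
    ← integral_add_right_eq_self (fun z ↦ gaussianPDFReal m v z • g z) r]
  refine integral_congr_ae (.of_forall fun z ↦ ?_)
  have hdensity : gaussianPDFReal m v z * exp (-(r * (z - m) + r ^ 2 / 2) / v) =
      gaussianPDFReal m v (z + r) := by
    simp only [gaussianPDFReal, mul_assoc, ← exp_add]
    congr 2
    field_simp
    ring
  simp only [smul_smul, hdensity]

end Integrals

section Hyperbolic

lemma abs_log_cosh_le_abs (x : ℝ) : |log (cosh x)| ≤ |x| := by
  rw [abs_of_nonneg (log_nonneg (one_le_cosh x)), log_le_iff_le_exp (cosh_pos x), ← cosh_abs,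
    cosh_eq]
  have : exp (-|x|) ≤ exp |x| := exp_le_exp.2 (neg_le_self (abs_nonneg x))
  linarith

lemma continuous_log_cosh : Continuous fun x ↦ log (cosh x) :=
  continuous_cosh.log fun x ↦ (cosh_pos x).ne'

lemma hasDerivAt_log_cosh (x : ℝ) : HasDerivAt (fun x ↦ log (cosh x)) (tanh x) x := by
  rw [tanh_eq_sinh_div_cosh]
  exact (hasDerivAt_cosh x).log (cosh_pos x).ne'

lemma continuous_tanh : Continuous tanh := by
  simp only [funext tanh_eq_sinh_div_cosh]
  exact continuous_sinh.div continuous_cosh fun x ↦ (cosh_pos x).ne'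

lemma one_sub_tanh (x : ℝ) : 1 - tanh x = exp (-x) * (cosh x)⁻¹ := by
  have := (cosh_pos x).ne'
  rw [tanh_eq_sinh_div_cosh, ← cosh_sub_sinh]
  field_simp

lemma abs_one_sub_tanh_le_two (x : ℝ) : |1 - tanh x| ≤ 2 :=
  abs_le.2 ⟨by linarith [tanh_lt_one x], by linarith [neg_one_lt_tanh x]⟩

lemma antitoneOn_sinh_div_mul_cosh_sq :
    AntitoneOn (fun r ↦ sinh r / (r * cosh r ^ 2)) (Ioi 0) := by
  have hderiv : ∀ r ∈ Ioi (0 : ℝ), HasDerivAt (fun r ↦ sinh r / (r * cosh r ^ 2))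
      (cosh r * (r - sinh r * cosh r - r * sinh r ^ 2) / (r * cosh r ^ 2) ^ 2) r := by
    intro r (hr : 0 < r)
    refine ((hasDerivAt_sinh r).fun_div ((hasDerivAt_id r).fun_mul ((hasDerivAt_cosh r).fun_pow 2))
      (mul_pos hr (pow_pos (cosh_pos r) 2)).ne').congr_deriv ?_
    simp only [id]
    congr 1
    linear_combination cosh r * r * cosh_sq r
  refine antitoneOn_of_hasDerivWithinAt_nonpos (convex_Ioi 0)
    (fun r hr ↦ (hderiv r hr).continuousAt.continuousWithinAt)
    (fun r hr ↦ (hderiv r (interior_subset hr)).hasDerivWithinAt) fun r hr ↦ ?_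
  replace hr : 0 < r := interior_subset hr
  have hr_le : r ≤ sinh r * cosh r := calc
    r ≤ sinh r := self_le_sinh_iff.2 hr.le
    _ ≤ sinh r * cosh r := le_mul_of_one_le_right (sinh_nonneg_iff.2 hr.le) (one_le_cosh r)
  have hsq : 0 ≤ r * sinh r ^ 2 := by positivity
  exact div_nonpos_of_nonpos_of_nonneg
    (mul_nonpos_of_nonneg_of_nonpos (cosh_pos r).le (by linarith)) (sq_nonneg _)

lemma convexOn_inv_cosh_sqrt : ConvexOn ℝ (Ici 0) fun s ↦ (cosh √s)⁻¹ := by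
  have hderiv : ∀ s ∈ Ioi (0 : ℝ), HasDerivAt (fun s ↦ (cosh √s)⁻¹)
      (-(1 / 2) * (sinh √s / (√s * cosh √s ^ 2))) s := by
    intro s hs
    have hsqrt := (sqrt_pos.2 hs).ne'
    have hcosh := (cosh_pos √s).ne'
    refine ((hasDerivAt_sqrt (ne_of_gt hs)).cosh.fun_inv hcosh).congr_deriv ?_
    field_simp
  refine MonotoneOn.convexOn_of_deriv (convex_Ici 0) ?_ ?_ ?_
  · exact ((continuous_cosh.comp continuous_sqrt).inv₀ fun s ↦ (cosh_pos _).ne').continuousOn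
  · rw [interior_Ici]
    exact fun s hs ↦ (hderiv s hs).differentiableAt.differentiableWithinAt
  · rw [interior_Ici]
    intro s hs t ht hst
    rw [(hderiv s hs).deriv, (hderiv t ht).deriv]
    exact mul_le_mul_of_nonpos_left (antitoneOn_sinh_div_mul_cosh_sq (sqrt_pos.2 hs)
      (sqrt_pos.2 ht) (sqrt_le_sqrt hst)) (by norm_num)

lemma antitone_inv_cosh_sqrt : Antitone fun s ↦ (cosh √s)⁻¹ := by
  intro s t hst
  refine inv_anti₀ (cosh_pos _) (cosh_le_cosh.2 ?_)
  simpa only [abs_of_nonneg (sqrt_nonneg _)] using sqrt_le_sqrt hst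

lemma convexOn_exp_mul_inv_cosh_sqrt_mul (z : ℝ) :
    ConvexOn ℝ (Ici 0) fun s ↦ exp (-s / 2) * (cosh (√s * z))⁻¹ := by
  have hexp : ConvexOn ℝ (Ici 0) fun s ↦ exp (s * (-1 / 2)) :=
    convexOn_comp_mul_const convexOn_exp (convex_Ici 0) _ (mapsTo_univ _ _)
  have hexp_anti : Antitone fun s ↦ exp (s * (-1 / 2)) :=
    fun s t hst ↦ exp_le_exp.2 (by linarith)
  have hsech : ConvexOn ℝ (Ici 0) fun s ↦ (cosh √(s * z ^ 2))⁻¹ :=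
    convexOn_comp_mul_const convexOn_inv_cosh_sqrt (convex_Ici 0) _
      fun s hs ↦ mul_nonneg hs (sq_nonneg z)
  have hsech_anti : Antitone fun s ↦ (cosh √(s * z ^ 2))⁻¹ :=
    antitone_inv_cosh_sqrt.comp_monotone (monotone_mul_right_of_nonneg (sq_nonneg z))
  refine (hexp.mul hsech (fun s _ ↦ (exp_pos _).le) (fun s _ ↦ (inv_pos.2 (cosh_pos _)).le)
    ((hexp_anti.monovary hsech_anti).monovaryOn _)).congr fun s hs ↦ ?_
  have hcosh : cosh √(s * z ^ 2) = cosh (√s * z) := by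
    rw [sqrt_mul hs, sqrt_sq_eq_abs, ← cosh_abs (√s * z), abs_mul, abs_of_nonneg (sqrt_nonneg s)]
  simp only [Pi.mul_apply, hcosh]
  ring_nf

end Hyperbolic

section RademacherChannel

lemma integrable_inv_cosh_mul {μ : Measure ℝ} [IsFiniteMeasure μ] (r : ℝ) :
    Integrable (fun z ↦ (cosh (r * z))⁻¹) μ := by
  have hcont : Continuous fun z ↦ (cosh (r * z))⁻¹ :=
    (continuous_cosh.comp (continuous_const_mul r)).inv₀ fun z ↦ (cosh_pos _).ne'
  refine .of_bound hcont.aestronglyMeasurable 1 (.of_forall fun z ↦ ?_)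
  rw [norm_inv, norm_of_nonneg (cosh_pos _).le]
  exact inv_le_one_of_one_le₀ (one_le_cosh _)

lemma integrable_one_sub_tanh_comp {μ : Measure ℝ} [IsFiniteMeasure μ] {u : ℝ → ℝ}
    (hu : Continuous u) : Integrable (fun z ↦ 1 - tanh (u z)) μ :=
  .of_bound (continuous_const.sub (continuous_tanh.comp hu)).aestronglyMeasurable 2
    (.of_forall fun _ ↦ abs_one_sub_tanh_le_two _)

lemma integral_one_sub_tanh_mul_comp_add_gaussianReal (r : ℝ) (g : ℝ → ℝ) :
    ∫ z, (1 - tanh (r * z + r ^ 2)) * g (z + r) ∂(gaussianReal 0 1) =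
      exp (-r ^ 2 / 2) * ∫ z, (cosh (r * z))⁻¹ * g z ∂(gaussianReal 0 1) := by
  rw [← integral_exp_smul_comp_add_gaussianReal 0 one_ne_zero r fun z ↦ (cosh (r * z))⁻¹ * g z,
    ← integral_const_mul]
  refine integral_congr_ae (.of_forall fun z ↦ ?_)
  have hexp : exp (-(r * z + r ^ 2)) =
      exp (-r ^ 2 / 2) * exp (-(r * (z - 0) + r ^ 2 / 2) / (1 : ℝ≥0)) := by
    rw [← exp_add, NNReal.coe_one]
    ring_nf
  have harg : r * (z + r) = r * z + r ^ 2 := by ring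
  simp only [one_sub_tanh, hexp, harg, smul_eq_mul]
  ring

lemma integral_one_sub_tanh_mul_add_gaussianReal (r : ℝ) :
    ∫ z, (1 - tanh (r * z + r ^ 2)) * (z + r) ∂(gaussianReal 0 1) = 0 := by
  have hodd : Function.Odd fun z ↦ (cosh (r * z))⁻¹ * z := fun z ↦ by
    simp only [mul_neg, cosh_neg]
  rw [integral_one_sub_tanh_mul_comp_add_gaussianReal r fun w ↦ w, integral_eq_zero_of_odd hodd,
    mul_zero]

lemma integral_tanh_mul_add_gaussianReal (r : ℝ) :
    ∫ z, tanh (r * z + r ^ 2) * (z + 2 * r) ∂(gaussianReal 0 1) =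
      2 * r - r * ∫ z, (1 - tanh (r * z + r ^ 2)) ∂(gaussianReal 0 1) := by
  have hid := integrable_id_gaussianReal 0 1
  have htanh : Integrable (fun z ↦ 1 - tanh (r * z + r ^ 2)) (gaussianReal 0 1) :=
    integrable_one_sub_tanh_comp (by fun_prop)
  have htanh_mul : Integrable (fun z ↦ (1 - tanh (r * z + r ^ 2)) * (z + r)) (gaussianReal 0 1) :=
    (hid.add (integrable_const r)).bdd_mul htanh.aestronglyMeasurable
      (.of_forall fun _ ↦ abs_one_sub_tanh_le_two _)
  have hsplit (z : ℝ) : tanh (r * z + r ^ 2) * (z + 2 * r) =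
      (z + 2 * r) - ((1 - tanh (r * z + r ^ 2)) * (z + r) + r * (1 - tanh (r * z + r ^ 2))) := by
    ring
  have hid_add : Integrable (fun z ↦ z + 2 * r) (gaussianReal 0 1) := hid.add (integrable_const _)
  have htanh_sum : Integrable (fun z ↦ (1 - tanh (r * z + r ^ 2)) * (z + r) +
      r * (1 - tanh (r * z + r ^ 2))) (gaussianReal 0 1) := htanh_mul.add (htanh.const_mul r)
  simp only [hsplit]
  rw [integral_sub hid_add htanh_sum, integral_add hid (integrable_const _),
    integral_add htanh_mul (htanh.const_mul r),
    integral_one_sub_tanh_mul_add_gaussianReal, integral_id_gaussianReal]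
  simp only [integral_const, integral_const_mul, probReal_univ, smul_eq_mul, one_mul, zero_add]

lemma hasDerivAt_integral_log_cosh_gaussianReal (r : ℝ) :
    HasDerivAt (fun r ↦ ∫ z, log (cosh (r * z + r ^ 2)) ∂(gaussianReal 0 1))
      (2 * r - r * ∫ z, (1 - tanh (r * z + r ^ 2)) ∂(gaussianReal 0 1)) r := by
  have hid := integrable_id_gaussianReal 0 1
  have hcont (x : ℝ) : Continuous fun z ↦ log (cosh (x * z + x ^ 2)) :=
    continuous_log_cosh.comp (by fun_prop)
  have hint : Integrable (fun z ↦ log (cosh (r * z + r ^ 2))) (gaussianReal 0 1) :=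
    ((hid.const_mul r).add (integrable_const (r ^ 2))).mono (hcont r).aestronglyMeasurable
      (.of_forall fun z ↦ abs_log_cosh_le_abs _)
  rw [← integral_tanh_mul_add_gaussianReal]
  refine (hasDerivAt_integral_of_dominated_loc_of_deriv_le
    (F' := fun x z ↦ tanh (x * z + x ^ 2) * (z + 2 * x)) (bound := fun z ↦ |z| + 2 * (|r| + 1))
    (Metric.ball_mem_nhds r one_pos) (.of_forall fun x ↦ (hcont x).aestronglyMeasurable) hint
    ?_ ?_ (hid.abs.add (integrable_const _)) ?_).2
  · exact ((continuous_tanh.comp (by fun_prop)).mul (by fun_prop)).aestronglyMeasurable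
  · refine .of_forall fun z x hx ↦ ?_
    have hx : |x| ≤ |r| + 1 := by
      have := abs_sub_abs_le_abs_sub x r
      have : |x - r| < 1 := hx
      linarith
    calc ‖tanh (x * z + x ^ 2) * (z + 2 * x)‖ ≤ |z + 2 * x| := by
          rw [norm_mul]
          exact mul_le_of_le_one_left (norm_nonneg _) (abs_tanh_lt_one _).le
      _ ≤ |z| + 2 * |x| := by simpa only [abs_mul, abs_two] using abs_add_le z (2 * x)
      _ ≤ |z| + 2 * (|r| + 1) := by gcongr
  · refine .of_forall fun z x _ ↦ ?_
    have harg : HasDerivAt (fun x ↦ x * z + x ^ 2) (z + 2 * x) x := by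
      simpa using ((hasDerivAt_id x).mul_const z).fun_add (hasDerivAt_pow 2 x)
    exact (hasDerivAt_log_cosh _).comp x harg

/-- The mutual information `i_v(γ)` between a uniform sign `X` and its observation `√γ X + Z`
through standard Gaussian noise. -/
noncomputable def rademacherInfo (γ : ℝ) : ℝ :=
  γ - ∫ z, log (cosh (√γ * z + γ)) ∂(gaussianReal 0 1)

/-- The minimal mean square error `1 - h(γ)` of estimating a uniform sign `X` from `√γ X + Z`;
it is written with `E[tanh (√γ Z + γ)]` rather than `E[tanh (√γ Z + γ) ^ 2]`, which are equal. -/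
noncomputable def rademacherMMSE (γ : ℝ) : ℝ :=
  ∫ z, (1 - tanh (√γ * z + γ)) ∂(gaussianReal 0 1)

lemma rademacherMMSE_zero : rademacherMMSE 0 = 1 := by
  simp [rademacherMMSE]

lemma rademacherMMSE_nonneg (γ : ℝ) : 0 ≤ rademacherMMSE γ :=
  integral_nonneg fun _ ↦ sub_nonneg.2 (tanh_lt_one _).le

lemma continuous_rademacherMMSE : Continuous rademacherMMSE := by
  refine continuous_of_dominated (bound := fun _ ↦ 2)
    (fun γ ↦ (integrable_one_sub_tanh_comp (by fun_prop)).aestronglyMeasurable)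
    (fun γ ↦ .of_forall fun z ↦ abs_one_sub_tanh_le_two _) (integrable_const _)
    (.of_forall fun z ↦ continuous_const.sub (continuous_tanh.comp (by fun_prop)))

lemma rademacherMMSE_eq_integral_exp_mul_inv_cosh {γ : ℝ} (hγ : 0 ≤ γ) :
    rademacherMMSE γ = ∫ z, exp (-γ / 2) * (cosh (√γ * z))⁻¹ ∂(gaussianReal 0 1) := by
  simpa only [mul_one, sq_sqrt hγ, integral_const_mul, rademacherMMSE] using
    integral_one_sub_tanh_mul_comp_add_gaussianReal √γ fun _ ↦ 1

lemma convexOn_rademacherMMSE : ConvexOn ℝ (Ici 0) rademacherMMSE :=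
  (convexOn_integral (convex_Ici 0) (.of_forall convexOn_exp_mul_inv_cosh_sqrt_mul)
    fun _ _ ↦ (integrable_inv_cosh_mul _).const_mul _).congr
    fun _ hγ ↦ (rademacherMMSE_eq_integral_exp_mul_inv_cosh hγ).symm

lemma rademacherInfo_of_nonneg {γ : ℝ} (hγ : 0 ≤ γ) :
    rademacherInfo γ = γ - ∫ z, log (cosh (√γ * z + √γ ^ 2)) ∂(gaussianReal 0 1) := by
  rw [rademacherInfo, sq_sqrt hγ]

lemma hasDerivAt_rademacherInfo {γ : ℝ} (hγ : 0 < γ) :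
    HasDerivAt rademacherInfo (rademacherMMSE γ / 2) γ := by
  have hsqrt := (sqrt_pos.2 hγ).ne'
  have hderiv := (hasDerivAt_id γ).fun_sub
    ((hasDerivAt_integral_log_cosh_gaussianReal √γ).comp γ (hasDerivAt_sqrt hγ.ne'))
  refine (hderiv.congr_of_eventuallyEq ?_).congr_deriv ?_
  · filter_upwards [Ioi_mem_nhds hγ] with x hx using rademacherInfo_of_nonneg hx.le
  · rw [sq_sqrt hγ.le, ← rademacherMMSE]
    field_simp
    ring

lemma continuousOn_rademacherInfo : ContinuousOn rademacherInfo (Ici 0) := by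
  have hcont : Continuous fun r ↦ ∫ z, log (cosh (r * z + r ^ 2)) ∂(gaussianReal 0 1) :=
    continuous_iff_continuousAt.2 fun r ↦ (hasDerivAt_integral_log_cosh_gaussianReal r).continuousAt
  exact (continuous_id.sub (hcont.comp continuous_sqrt)).continuousOn.congr
    fun _ hγ ↦ rademacherInfo_of_nonneg hγ

lemma hasDerivWithinAt_rademacherInfo {γ : ℝ} (hγ : 0 ≤ γ) :
    HasDerivWithinAt rademacherInfo (rademacherMMSE γ / 2) (Ici 0) γ := by
  obtain rfl | hγ := hγ.eq_or_lt
  · refine hasDerivWithinAt_Ici_of_tendsto_deriv (s := Ioi 0)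
      (fun x hx ↦ (hasDerivAt_rademacherInfo hx).differentiableAt.differentiableWithinAt)
      ((continuousOn_rademacherInfo 0 self_mem_Ici).mono Ioi_subset_Ici_self)
      self_mem_nhdsWithin ?_
    refine ((continuous_rademacherMMSE.div_const 2).tendsto 0 |>.mono_left
      nhdsWithin_le_nhds).congr' ?_
    filter_upwards [self_mem_nhdsWithin] with x hx using (hasDerivAt_rademacherInfo hx).deriv.symm
  · exact (hasDerivAt_rademacherInfo hγ).hasDerivWithinAt

end RademacherChannel

section Potential

/-- The free-energy potential `f` of the theorem. -/
noncomputable def potential (α σ η q : ℝ) : ℝ :=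
  α * (1 - η) * rademacherInfo (q / σ ^ 2) + α / (2 * σ ^ 2) * (1 - q)
    - (1 / 2) * (q + log (1 - q))

/-- The derivative of `potential α σ η` on `[0, 1)`, one-sided at `0`. -/
noncomputable def potentialDeriv (α σ η q : ℝ) : ℝ :=
  α / (2 * σ ^ 2) * ((1 - η) * rademacherMMSE (q / σ ^ 2) - 1) + (1 / 2) * ((1 - q)⁻¹ - 1)

variable {α σ η q : ℝ}

lemma hasDerivWithinAt_potential (hq : q ∈ Ico 0 1) :
    HasDerivWithinAt (potential α σ η) (potentialDeriv α σ η q) (Ici 0) q := by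
  have hscale : HasDerivWithinAt (fun q ↦ q / σ ^ 2) (1 / σ ^ 2) (Ici 0) q :=
    (hasDerivWithinAt_id q _).div_const _
  have hinfo : HasDerivWithinAt (fun q ↦ rademacherInfo (q / σ ^ 2))
      (rademacherMMSE (q / σ ^ 2) / 2 * (1 / σ ^ 2)) (Ici 0) q :=
    HasDerivWithinAt.comp (h₂ := rademacherInfo) q
      (hasDerivWithinAt_rademacherInfo (div_nonneg hq.1 (sq_nonneg σ))) hscale
      fun x hx ↦ div_nonneg hx (sq_nonneg σ)
  have hone_sub : HasDerivWithinAt (fun q ↦ 1 - q) (-1) (Ici 0) q :=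
    (hasDerivWithinAt_id q _).const_sub 1
  refine (((hinfo.const_mul (α * (1 - η))).fun_add (hone_sub.const_mul (α / (2 * σ ^ 2)))).fun_sub
    (((hasDerivWithinAt_id q _).fun_add (hone_sub.log (sub_pos.2 hq.2).ne')).const_mul
      (1 / 2))).congr_deriv ?_
  rw [potentialDeriv]
  ring

lemma convexOn_inv_one_sub : ConvexOn ℝ (Iio 1) fun q : ℝ ↦ (1 - q)⁻¹ := by
  have h := (convexOn_zpow (𝕜 := ℝ) (-1)).comp_affineMap (AffineMap.lineMap (1 : ℝ) 0)
  refine (h.subset (fun q hq ↦ ?_) (convex_Iio 1)).congr fun q _ ↦ ?_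
  · simpa [AffineMap.lineMap_apply] using hq
  · simp [AffineMap.lineMap_apply, neg_add_eq_sub]

lemma convexOn_potentialDeriv (hα : 0 ≤ α) (hη : η ≤ 1) :
    ConvexOn ℝ (Ico 0 1) (potentialDeriv α σ η) := by
  have hmmse : ConvexOn ℝ (Ico 0 1) fun q ↦ rademacherMMSE (q / σ ^ 2) :=
    convexOn_comp_mul_const convexOn_rademacherMMSE (convex_Ico 0 1) _
      fun q hq ↦ mul_nonneg hq.1 (inv_nonneg.2 (sq_nonneg σ))
  have hinv := convexOn_inv_one_sub.subset (Ico_subset_Iio_self (a := 0)) (convex_Ico 0 1)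
  exact ((hmmse.smul (sub_nonneg.2 hη)).add_const (-1) |>.smul (c := α / (2 * σ ^ 2))
    (by positivity)).add ((hinv.add_const (-1)).smul (c := 1 / 2) (by norm_num))

lemma continuousOn_potentialDeriv : ContinuousOn (potentialDeriv α σ η) (Iio 1) := by
  have hinv : ContinuousOn (fun q : ℝ ↦ (1 - q)⁻¹) (Iio 1) :=
    (by fun_prop : ContinuousOn (fun q : ℝ ↦ 1 - q) _).inv₀ fun q hq ↦ (sub_pos.2 hq).ne'
  have hmmse : Continuous fun q ↦ rademacherMMSE (q / σ ^ 2) :=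
    continuous_rademacherMMSE.comp (by fun_prop)
  exact (continuousOn_const.mul ((continuousOn_const.mul hmmse.continuousOn).sub
    continuousOn_const)).add (continuousOn_const.mul (hinv.sub continuousOn_const))

lemma potentialDeriv_zero : potentialDeriv α σ η 0 = -(η * α / (2 * σ ^ 2)) := by
  simp only [potentialDeriv, zero_div, rademacherMMSE_zero, sub_zero, inv_one]
  ring

lemma exists_potentialDeriv_pos (hα : 0 ≤ α) (hη : η ≤ 1) :
    ∃ q ∈ Ico 0 1, 0 < potentialDeriv α σ η q := by
  set A := α / (2 * σ ^ 2) with hA_def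
  have hA : 0 ≤ A := by positivity
  -- `q` is chosen so that `(1 - q)⁻¹ = 2 * A + 2`, which beats the lower bound `-A` of the rest.
  refine ⟨1 - (2 * A + 2)⁻¹, ⟨?_, ?_⟩, ?_⟩
  · exact sub_nonneg.2 (inv_le_one_of_one_le₀ (by linarith))
  · exact sub_lt_self _ (by positivity)
  · rw [potentialDeriv, sub_sub_cancel, inv_inv, ← hA_def]
    have := mul_nonneg hA (mul_nonneg (sub_nonneg.2 hη)
      (rademacherMMSE_nonneg ((1 - (2 * A + 2)⁻¹) / σ ^ 2)))
    linarith

end Potential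

/-- For `α, σ > 0` and `η ∈ (0,1]`, the free-energy potential
`f(q) = α(1−η)·i_v(q/σ²) + (α/(2σ²))(1−q) − (1/2)(q + log(1−q))`, where
`i_v(γ) = γ − E[log cosh(√γ Z + γ)]` for `Z ~ N(0,1)`, admits a unique critical point
on `[0,1)`, which is the unique minimizer of `f` on `[0,1)`. -/
theorem stmt11 (α σ η : ℝ) (hα : 0 < α) (hσ : 0 < σ) (hη : η ∈ Set.Ioc (0 : ℝ) 1)
    (iv : ℝ → ℝ)
    (hiv : iv = fun γ : ℝ => γ - ∫ z, Real.log (Real.cosh (Real.sqrt γ * z + γ))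
        ∂(gaussianReal 0 1))
    (f : ℝ → ℝ)
    (hf : f = fun q : ℝ => α * (1 - η) * iv (q / σ ^ 2)
        + α / (2 * σ ^ 2) * (1 - q) - (1 / 2) * (q + Real.log (1 - q))) :
    (∃! q, q ∈ Set.Ico (0 : ℝ) 1 ∧ HasDerivAt f 0 q)
    ∧ ∀ q ∈ Set.Ico (0 : ℝ) 1, HasDerivAt f 0 q →
        ∀ x ∈ Set.Ico (0 : ℝ) 1, x ≠ q → f q < f x := by
  obtain rfl : f = potential α σ η := by rw [hf, hiv]; rfl
  have hconvex : ConvexOn ℝ (Ico 0 1) (potentialDeriv α σ η) := convexOn_potentialDeriv hα.le hη.2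
  have hleast : IsLeast (Ico (0 : ℝ) 1) 0 := isLeast_Ico one_pos
  have hzero : potentialDeriv α σ η 0 < 0 := by
    have := mul_pos hη.1 hα
    rw [potentialDeriv_zero]
    exact neg_neg_of_pos (by positivity)
  have hcrit (q : ℝ) (hq : q ∈ Ico 0 1) :
      HasDerivAt (potential α σ η) 0 q ↔ potentialDeriv α σ η q = 0 :=
    hasDerivAt_zero_iff_of_hasDerivWithinAt_Ici (hasDerivWithinAt_potential hq) hzero.ne hq.1
  constructor
  · exact (existsUnique_congr fun q ↦ and_congr_right (hcrit q)).2 <|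
      existsUnique_root_of_convexOn hconvex (continuousOn_potentialDeriv.mono Ico_subset_Iio_self)
        hleast hzero (exists_potentialDeriv_pos hα.le hη.2)
  · intro q hq hderiv x hx hxq
    exact lt_of_convexOn_hasDerivWithinAt_of_root hconvex
      (fun y hy ↦ (hasDerivWithinAt_potential hy).mono Ico_subset_Ici_self)
      hleast hzero hq ((hcrit q hq).1 hderiv) hx hxq
end
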